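/- arXiv:1506.02407 — 2 statements merged into one kernel-verified Lean document; each statement's English description precedes it below -/
import Mathlib

section
/- Let P be a finite poset. The order polytope O(P), i.e., the convex hull in ℝ^P of the characteristic vectors of the order filters of P, equals the set of order-preserving functions from P to [0,1]: O(P) = {f ∈ ℝ^P : 0 ≤ f(p) ≤ 1 for all p ∈ P, and f(p) ≤ f(q) whenever p ≤ q in P}. -/
/-!
A function `f` with finitely many values `0 ≤ t₁ < ⋯ < tₙ ≤ 1` is a discrete layer cake
`f = ∑ i, (tᵢ - tᵢ₋₁) • 𝟙_{f > tᵢ₋₁}` with `t₀ = 0`; the coefficients sum to at most `1`, and the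
missing weight goes to the zero function, which is the indicator of `{f > 1} = ∅`. The layers are
peeled off from below: `(f - a)⁺ = (b - a) • 𝟙_{f > a} + (f - b)⁺` if `b` is the least value of `f`
above `a`. When `f` is order preserving, the superlevel sets are order filters.
-/

open Set
open scoped Pointwise

theorem posPart_sub_eq_smul_indicator_add_posPart_sub {α R : Type*} [Ring R] [LinearOrder R]
    [AddLeftMono R] {f : α → R} {a b : R} (hab : a ≤ b) (hgap : ∀ p, a < f p → b ≤ f p) :
    (fun p ↦ (f p - a)⁺) =
      (b - a) • indicator {p | a < f p} (1 : α → R) + fun p ↦ (f p - b)⁺ := by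
  funext p
  by_cases hp : a < f p
  · have hb : b ≤ f p := hgap p hp
    simp [hp, posPart_of_nonneg (sub_nonneg.2 hp.le), posPart_of_nonneg (sub_nonneg.2 hb)]
  · have ha : f p ≤ a := not_lt.1 hp
    simp [hp, posPart_of_nonpos (sub_nonpos.2 ha), posPart_of_nonpos (sub_nonpos.2 (ha.trans hab))]

section LayerCake

variable {α 𝕜 : Type*} [Field 𝕜] [LinearOrder 𝕜] [IsStrictOrderedRing 𝕜] {f : α → 𝕜}

theorem posPart_sub_mem_smul_of_finite_range {K : Set (α → 𝕜)} (hK : Convex 𝕜 K)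
    (hlevel : ∀ t, indicator {p | t < f p} 1 ∈ K) (hfin : (range f).Finite) {c : 𝕜}
    (hfc : ∀ p, f p ≤ c) (a : 𝕜) :
    (fun p ↦ (f p - a)⁺) ∈ (c - a) • K := by
  have hzero : 0 ∈ K := by
    simpa [not_lt.2 (hfc _), ← Pi.zero_def] using hlevel c
  suffices h : ∀ s : Finset 𝕜, ∀ a, (∀ t ∈ s, a ≤ t ∧ t ≤ c) → (∀ p, a < f p → f p ∈ s) →
      (fun p ↦ (f p - a)⁺) ∈ (c - a) • K by
    refine h {t ∈ hfin.toFinset | a < t} a ?_ ?_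
    · simpa using fun p hp ↦ ⟨le_of_lt hp, hfc p⟩
    · simp
  intro s
  induction s using Finset.induction_on_min with
  | empty =>
    intro a _ hs
    have hvanish : (fun p ↦ (f p - a)⁺) = 0 := by
      funext p
      simpa using hs p
    rw [hvanish]
    exact zero_mem_smul_set hzero
  | insert b s hbs ih =>
    intro a hsc hs
    obtain ⟨hab, hbc⟩ := hsc b (Finset.mem_insert_self b s)
    have hgap : ∀ p, a < f p → b ≤ f p := fun p hp ↦
      (Finset.mem_insert.1 (hs p hp)).elim Eq.ge fun h ↦ (hbs _ h).le
    have htail : (fun p ↦ (f p - b)⁺) ∈ (c - b) • K :=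
      ih b (fun t ht ↦ ⟨(hbs t ht).le, (hsc t (Finset.mem_insert_of_mem ht)).2⟩)
        fun p hp ↦ Finset.mem_of_mem_insert_of_ne (hs p (hab.trans_lt hp)) hp.ne'
    rw [posPart_sub_eq_smul_indicator_add_posPart_sub hab hgap, ← sub_add_sub_cancel' b a c,
      hK.add_smul (sub_nonneg.2 hab) (sub_nonneg.2 hbc)]
    exact add_mem_add (smul_mem_smul_set (hlevel a)) htail

theorem mem_convexHull_range_indicator_superlevel (hfin : (range f).Finite)
    (hf : ∀ p, f p ∈ Icc 0 1) :
    f ∈ convexHull 𝕜 (range fun t : 𝕜 ↦ indicator {p | t < f p} (1 : α → 𝕜)) := by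
  have hlevel (t : 𝕜) : indicator {p | t < f p} (1 : α → 𝕜) ∈
      convexHull 𝕜 (range fun t : 𝕜 ↦ indicator {p | t < f p} (1 : α → 𝕜)) :=
    subset_convexHull 𝕜 _ (mem_range_self t)
  have hposPart (p : α) : (f p)⁺ = f p := posPart_of_nonneg (hf p).1
  simpa [hposPart] using
    posPart_sub_mem_smul_of_finite_range (convex_convexHull 𝕜 _) hlevel hfin (fun p ↦ (hf p).2)
      0

end LayerCake

theorem convex_setOfPred_monotone (𝕜 α E : Type*) [Semiring 𝕜] [PartialOrder 𝕜] [Preorder α]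
    [AddCommMonoid E] [Preorder E] [AddLeftMono E] [SMul 𝕜 E] [PosSMulMono 𝕜 E] :
    Convex 𝕜 {f : α → E | Monotone f} :=
  fun _ hf _ hg _ _ ha hb _ ↦ (hf.const_smul ha).add (hg.const_smul hb)

theorem convex_setOfPred_finite_range (𝕜 α E : Type*) [Semiring 𝕜] [PartialOrder 𝕜]
    [AddCommMonoid E] [SMul 𝕜 E] : Convex 𝕜 {f : α → E | (range f).Finite} := by
  intro f hf g hg a b _ _ _
  refine (hf.image2 (fun x y ↦ a • x + b • y) hg).subset (range_subset_iff.2 fun p ↦ ?_)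
  exact mem_image2_of_mem (mem_range_self p) (mem_range_self p)

theorem monotone_indicator_of_isUpperSet {α M : Type*} [Preorder α] [Preorder M] [Zero M]
    {J : Set α} (hJ : IsUpperSet J) {f : α → M} (hf : MonotoneOn f J) (hf0 : ∀ p ∈ J, 0 ≤ f p) :
    Monotone (J.indicator f) := by
  intro p q hpq
  by_cases hp : p ∈ J
  · simpa [hp, hJ hpq hp] using hf hp (hJ hpq hp) hpq
  · simpa [hp] using indicator_nonneg hf0 q

theorem finite_range_indicator {α M : Type*} [Zero M] {f : α → M} (hf : (range f).Finite)
    (s : Set α) : (range (s.indicator f)).Finite := by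
  refine (hf.insert 0).subset (range_subset_iff.2 fun p ↦ ?_)
  exact (indicator_eq_zero_or_self s f p).imp_right fun h ↦ ⟨p, h.symm⟩

theorem stmt13_general (𝕜 P : Type*) [Field 𝕜] [LinearOrder 𝕜] [IsStrictOrderedRing 𝕜]
    [Preorder P] :
    convexHull 𝕜 {x : P → 𝕜 | ∃ J : Set P, IsUpperSet J ∧ x = indicator J 1} =
      {f : P → 𝕜 | (∀ p, f p ∈ Icc 0 1) ∧ Monotone f ∧ (range f).Finite} := by
  apply Subset.antisymm
  · have hunit : Convex 𝕜 {f : P → 𝕜 | ∀ p, f p ∈ Icc 0 1} := by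
      simpa [Set.pi] using convex_pi (s := univ) fun _ _ ↦ convex_Icc (0 : 𝕜) 1
    refine convexHull_min ?_ <| hunit.inter <|
      (convex_setOfPred_monotone 𝕜 P 𝕜).inter (convex_setOfPred_finite_range 𝕜 P 𝕜)
    rintro _ ⟨J, hJ, rfl⟩
    refine ⟨fun p ↦ ?_, ?_, finite_range_indicator finite_range_const J⟩
    · by_cases hp : p ∈ J <;> simp [hp]
    · exact monotone_indicator_of_isUpperSet hJ monotoneOn_const fun _ _ ↦ zero_le_one
  · rintro f ⟨hf, hmono, hfin⟩
    refine convexHull_mono ?_ (mem_convexHull_range_indicator_superlevel hfin hf)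
    rintro _ ⟨t, rfl⟩
    exact ⟨_, (isUpperSet_Ioi t).preimage hmono, rfl⟩

/-- The order polytope `O(P)`, i.e. the convex hull in `ℝ^P` of the
characteristic vectors of the order filters of `P`, equals the set of order-preserving
functions `P → [0,1]`. -/
theorem stmt13 (P : Type*) [PartialOrder P] [Fintype P] :
    convexHull ℝ {x : P → ℝ | ∃ J : Set P, IsUpperSet J ∧ x = Set.indicator J 1} =
    {f : P → ℝ | (∀ p : P, 0 ≤ f p ∧ f p ≤ 1) ∧ ∀ p q : P, p ≤ q → f p ≤ f q} := by
  simp [stmt13_general, Monotone, Set.toFinite]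
end

section
/- Let P = {p_1, …, p_n} be a finite poset. The Hibi ring ℂ[P] is a normal domain: it is an integral domain that is integrally closed in its field of fractions. (This underlies the corollary that the projective Hibi variety X_P is projectively normal.) -/
open MvPolynomial

/-- The Hibi ring `ℂ[P]` of a finite poset `P`: the `ℂ`-subalgebra of the polynomial ring
`ℂ[x_p (p ∈ P), t]` (variables indexed by `Option P`, with `t` the variable `X none`)
generated by the monomials `t · ∏_{p ∈ I} x_p` for `I` an order ideal of `P`. -/
noncomputable def hibiRing (P : Type*) [PartialOrder P] [Fintype P] :
    Subalgebra ℂ (MvPolynomial (Option P) ℂ) :=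
  Algebra.adjoin ℂ
    {m : MvPolynomial (Option P) ℂ | ∃ I : Finset P, IsLowerSet (↑I : Set P) ∧
      m = X none * ∏ p ∈ I, X (some p)}

/-!
For `w ∈ ℤ^σ`, the least `w`-weight of a monomial of `f` is a valuation on the polynomial ring, and
elements integral over a valuation's ring of integers belong to it. So if `f` is integral over the
algebra `A` generated by the monomials with exponents in `S`, every exponent of `f` pairs
nonnegatively with the dual cone of `S`. When these inequalities cut out exactly the submonoid
generated by `S`, this says `f ∈ A`, and `A` inherits normality from the polynomial ring.

For the Hibi ring, the inequalities `d p ≤ d t` and `d q ≤ d p` for `p ≤ q` suffice: an exponent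
vector `d` satisfying them is the sum over `k < d t` of the exponent vectors of the generators
attached to the order ideals `{p | k < d p}`.
-/

theorem addValuation_nonneg_of_isIntegral {A B Γ₀ : Type*} [CommRing A] [CommRing B] [Algebra A B]
    [LinearOrderedAddCommGroupWithTop Γ₀] (v : AddValuation B Γ₀)
    (hA : ∀ a, 0 ≤ v (algebraMap A B a)) {b : B} (hb : IsIntegral A b) : 0 ≤ v b := by
  let O := (AddValuation.toValuation v).integer
  let ι : A →+* O := (algebraMap A B).codRestrict O hA
  exact (Valuation.integer.integers _).mem_of_integral
    (hb.map_of_comp_eq ι (RingHom.id B) rfl : IsIntegral O b)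

theorem weight_sub {σ M : Type*} [AddCommGroup M] (v w : σ → M) (d : σ →₀ ℕ) :
    Finsupp.weight (v - w) d = Finsupp.weight v d - Finsupp.weight w d := by
  simp only [Finsupp.weight_apply, Pi.sub_apply, smul_sub, Finsupp.sum_sub]

section WeightValuation

variable {σ Γ R : Type*}

section Expansion

variable [CommSemiring R] [AddCommMonoid Γ] [PartialOrder Γ] [IsOrderedCancelAddMonoid Γ]

/-- The expansion of a polynomial by weight: the substitution `xᵢ ↦ xᵢ T ^ w i` into Hahn series
in `T`, which makes the weight `w` visible as the exponent of `T`. -/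
noncomputable def weightExpansion (w : σ → Γ) :
    MvPolynomial σ R →ₐ[R] HahnSeries Γ (MvPolynomial σ R) :=
  aeval fun i => HahnSeries.single (w i) (X i)

theorem weightExpansion_monomial (w : σ → Γ) (d : σ →₀ ℕ) (a : R) :
    weightExpansion w (monomial d a) =
      HahnSeries.single (Finsupp.weight w d) (monomial d a) := by
  induction d using Finsupp.induction_linear generalizing a with
  | zero =>
    simp [weightExpansion, algHom_C, HahnSeries.algebraMap_apply, HahnSeries.C_apply, algebraMap_eq]
  | single i n =>
    rw [← C_mul_X_pow_eq_monomial]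
    simp [weightExpansion, algHom_C, HahnSeries.algebraMap_apply, HahnSeries.C_apply, algebraMap_eq,
      HahnSeries.single_pow, HahnSeries.single_mul_single, Finsupp.weight_single]
  | add d e hd he =>
    rw [← mul_one a, ← monomial_mul, map_mul, hd, he, HahnSeries.single_mul_single, map_add]

theorem coeff_weightExpansion (w : σ → Γ) (f : MvPolynomial σ R) (g : Γ) :
    (weightExpansion w f).coeff g = weightedHomogeneousComponent w g f := by
  classical
  induction f using MvPolynomial.induction_on' with
  | monomial d a =>
    ext e
    rw [weightExpansion_monomial, HahnSeries.coeff_single, coeff_weightedHomogeneousComponent]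
    aesop
  | add f₁ f₂ h₁ h₂ => simp [h₁, h₂]

end Expansion

variable [CommRing R] [IsDomain R] [AddCommGroup Γ] [LinearOrder Γ] [IsOrderedAddMonoid Γ]

/-- The monomial valuation of weight `w`: the least weight of a monomial of `f`, and `⊤` at `0`. -/
noncomputable def weightValuation (w : σ → Γ) : AddValuation (MvPolynomial σ R) (WithTop Γ) :=
  (HahnSeries.addVal Γ (MvPolynomial σ R)).comap (weightExpansion w).toRingHom

theorem le_weightValuation_iff {w : σ → Γ} {f : MvPolynomial σ R} {g : Γ} :
    g ≤ weightValuation w f ↔ ∀ d ∈ f.support, g ≤ Finsupp.weight w d := by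
  classical
  change g ≤ HahnSeries.addVal Γ _ (weightExpansion w f) ↔ _
  simp only [HahnSeries.addVal_apply, HahnSeries.le_orderTop_iff_forall, coeff_weightExpansion,
    MvPolynomial.ext_iff, coeff_weightedHomogeneousComponent, mem_support_iff, WithTop.coe_lt_coe]
  constructor
  · intro h d hd
    by_contra! hlt
    exact hd (by simpa using h _ hlt d)
  · intro h j hj d
    split_ifs with hdj
    · by_contra hd
      exact hj.not_ge (hdj ▸ h d hd)
    · rfl

end WeightValuation

section MonomialSubalgebra

variable {σ R : Type*}

/-- The subalgebra generated by the monomials with exponents in `S`, that is, the monoid algebra of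
the additive submonoid generated by `S`, inside the polynomial ring. -/
noncomputable def monomialSubalgebra (R : Type*) [CommSemiring R] (S : Set (σ →₀ ℕ)) :
    Subalgebra R (MvPolynomial σ R) :=
  Algebra.adjoin R ((fun s => monomial s 1) '' S)

theorem monomial_mem_monomialSubalgebra [CommSemiring R] {S : Set (σ →₀ ℕ)} {d : σ →₀ ℕ}
    (hd : d ∈ AddSubmonoid.closure S) : monomial d 1 ∈ monomialSubalgebra R S := by
  induction hd using AddSubmonoid.closure_induction with
  | mem s hs => exact Algebra.subset_adjoin ⟨s, hs, rfl⟩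
  | zero => exact one_mem _
  | add d e _ _ hd he => simpa [monomial_mul] using mul_mem hd he

theorem mem_monomialSubalgebra_of_support_subset_closure [CommSemiring R] {S : Set (σ →₀ ℕ)}
    {f : MvPolynomial σ R} (hf : ↑f.support ⊆ (AddSubmonoid.closure S : Set (σ →₀ ℕ))) :
    f ∈ monomialSubalgebra R S := by
  rw [f.as_sum]
  refine sum_mem fun d hd => ?_
  rw [← mul_one (coeff d f), ← smul_eq_mul, ← smul_monomial]
  exact Subalgebra.smul_mem _ (monomial_mem_monomialSubalgebra (hf hd)) _

theorem weightValuation_nonneg_of_mem_monomialSubalgebra {Γ : Type*} [CommRing R] [IsDomain R]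
    [AddCommGroup Γ] [LinearOrder Γ] [IsOrderedAddMonoid Γ] {w : σ → Γ} {S : Set (σ →₀ ℕ)}
    (hS : ∀ s ∈ S, 0 ≤ Finsupp.weight w s) {f : MvPolynomial σ R}
    (hf : f ∈ monomialSubalgebra R S) : 0 ≤ weightValuation w f := by
  have nonneg_monomial {d : σ →₀ ℕ} (hd : 0 ≤ Finsupp.weight w d) (a : R) :
      0 ≤ weightValuation w (monomial d a) :=
    le_weightValuation_iff.2 fun e he => by
      rwa [Finset.mem_singleton.1 (support_monomial_subset he)]
  induction hf using Algebra.adjoin_induction with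
  | mem f hf =>
    obtain ⟨s, hs, rfl⟩ := hf
    exact nonneg_monomial (hS s hs) 1
  | algebraMap a => exact nonneg_monomial (map_zero _).ge a
  | add f g _ _ hf hg => exact (weightValuation w).map_le_add hf hg
  | mul f g _ _ hf hg =>
    rw [AddValuation.map_mul]
    exact add_nonneg hf hg

instance isIntegrallyClosed_mvPolynomial [CommRing R] [IsDomain R] [IsIntegrallyClosed R] :
    IsIntegrallyClosed (MvPolynomial σ R) := by
  let K := FractionRing R
  let _ : Algebra (MvPolynomial σ R) (MvPolynomial σ K) := algebraMvPolynomial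
  have hinj := map_injective (σ := σ) _ (IsFractionRing.injective R K)
  have : FaithfulSMul (MvPolynomial σ R) (MvPolynomial σ K) :=
    (faithfulSMul_iff_algebraMap_injective _ _).2 hinj
  have : IsIntegrallyClosedIn (MvPolynomial σ R) (MvPolynomial σ K) :=
    isIntegrallyClosedIn_iff.2 ⟨hinj, fun {f} hf => mem_range_map_iff_coeffs_subset.2 fun a ha => by
      obtain ⟨d, -, rfl⟩ := mem_coeffs_iff.1 ha
      exact IsIntegrallyClosed.isIntegral_iff.1 (isIntegral_iff_isIntegral_coeff.1 hf d)⟩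
  exact .of_isIntegrallyClosed_of_isIntegrallyClosedIn _ (MvPolynomial σ K)

theorem isIntegrallyClosed_monomialSubalgebra [CommRing R] [IsDomain R] [IsIntegrallyClosed R]
    {S : Set (σ →₀ ℕ)}
    (hS : ∀ d, (∀ w : σ → ℤ, (∀ s ∈ S, 0 ≤ Finsupp.weight w s) → 0 ≤ Finsupp.weight w d) →
      d ∈ AddSubmonoid.closure S) :
    IsIntegrallyClosed (monomialSubalgebra R S) := by
  let A := monomialSubalgebra R S
  have mem_of_isIntegral {f : MvPolynomial σ R} (hf : IsIntegral A f) : f ∈ A :=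
    mem_monomialSubalgebra_of_support_subset_closure fun d hd => hS d fun w hw =>
      le_weightValuation_iff.1 (addValuation_nonneg_of_isIntegral (weightValuation w)
        (fun a => weightValuation_nonneg_of_mem_monomialSubalgebra hw a.2) hf) d hd
  have : IsIntegrallyClosedIn A (MvPolynomial σ R) :=
    isIntegrallyClosedIn_iff.2
      ⟨Subtype.val_injective, fun {f} hf => ⟨⟨f, mem_of_isIntegral hf⟩, rfl⟩⟩
  exact .of_isIntegrallyClosed_of_isIntegrallyClosedIn A (MvPolynomial σ R)

end MonomialSubalgebra

section HibiAlgebra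

variable {P : Type*}

/-- The Hibi algebra over an arbitrary coefficient ring, of a preordered set that may be
infinite, where only the finite order ideals give generators. -/
noncomputable def hibiAlgebra (R P : Type*) [CommSemiring R] [Preorder P] :
    Subalgebra R (MvPolynomial (Option P) R) :=
  Algebra.adjoin R
    {m | ∃ I : Finset P, IsLowerSet (I : Set P) ∧ m = X none * ∏ p ∈ I, X (some p)}

/-- The exponent vector of the generator `t · ∏_{p ∈ I} x_p`. -/
noncomputable def hibiExponent (I : Finset P) : Option P →₀ ℕ :=
  ∑ i ∈ I.insertNone, Finsupp.single i 1

theorem hibiExponent_apply [DecidableEq P] (I : Finset P) (i : Option P) :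
    hibiExponent I i = if i ∈ I.insertNone then 1 else 0 := by
  simp only [hibiExponent, Finsupp.finsetSum_apply, Finsupp.single_apply, Finset.sum_ite_eq']

theorem monomial_hibiExponent {R : Type*} [CommSemiring R] (I : Finset P) :
    monomial (hibiExponent I) (1 : R) = X none * ∏ p ∈ I, X (some p) := by
  rw [hibiExponent, monomial_sum_one]
  exact Finset.prod_insertNone _ _

/-- The superlevel set `{p | k < d p}` of an exponent vector, ignoring the exponent of `t`. -/
noncomputable def superlevelSet (d : Option P →₀ ℕ) (k : ℕ) : Finset P :=
  {p ∈ d.some.support | k < d (some p)}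

theorem mem_superlevelSet {d : Option P →₀ ℕ} {k : ℕ} {p : P} :
    p ∈ superlevelSet d k ↔ k < d (some p) := by
  simp only [superlevelSet, Finset.mem_filter, Finsupp.mem_support_iff, Finsupp.some_apply]
  omega

theorem sum_hibiExponent_superlevelSet {d : Option P →₀ ℕ} (hd : ∀ p, d (some p) ≤ d none) :
    ∑ k ∈ Finset.range (d none), hibiExponent (superlevelSet d k) = d := by
  classical
  ext i
  simp only [Finsupp.finsetSum_apply, hibiExponent_apply, Finset.sum_boole, Nat.cast_id]
  cases i with
  | none => simp
  | some p =>
    have : {k ∈ Finset.range (d none) | k < d (some p)} = Finset.range (d (some p)) := by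
      grind
    simp [mem_superlevelSet, this]

variable [Preorder P]

/-- The exponent vectors of the generators of the Hibi ring. -/
def hibiExponents (P : Type*) [Preorder P] : Set (Option P →₀ ℕ) :=
  hibiExponent '' {I : Finset P | IsLowerSet (I : Set P)}

theorem isLowerSet_superlevelSet {d : Option P →₀ ℕ} (hd : Antitone fun p => d (some p)) (k : ℕ) :
    IsLowerSet (superlevelSet d k : Set P) := fun _ _ hqp hp =>
  mem_superlevelSet.2 ((mem_superlevelSet.1 hp).trans_le (hd hqp))

theorem mem_closure_hibiExponents {d : Option P →₀ ℕ} (hd_le : ∀ p, d (some p) ≤ d none)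
    (hd_anti : Antitone fun p => d (some p)) :
    d ∈ AddSubmonoid.closure (hibiExponents P) := by
  rw [← sum_hibiExponent_superlevelSet hd_le]
  exact sum_mem fun k _ =>
    AddSubmonoid.subset_closure ⟨_, isLowerSet_superlevelSet hd_anti k, rfl⟩

theorem mem_closure_hibiExponents_of_weight_nonneg {d : Option P →₀ ℕ}
    (hd : ∀ w : Option P → ℤ, (∀ s ∈ hibiExponents P, 0 ≤ Finsupp.weight w s) →
      0 ≤ Finsupp.weight w d) :
    d ∈ AddSubmonoid.closure (hibiExponents P) := by
  classical
  have le_of_generators {i j : Option P} (h : ∀ I : Finset P, IsLowerSet (I : Set P) →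
      i ∈ I.insertNone → j ∈ I.insertNone) : d i ≤ d j := by
    have weight_eq (e : Option P →₀ ℕ) :
        Finsupp.weight (Pi.single j 1 - Pi.single i 1 : Option P → ℤ) e = e j - e i := by
      simp only [weight_sub, Finsupp.weight_single_index, nsmul_eq_mul, mul_one]
    have weight_nonneg := hd (Pi.single j 1 - Pi.single i 1) <| by
      rintro _ ⟨I, hI, rfl⟩
      have := h I hI
      rw [weight_eq, hibiExponent_apply, hibiExponent_apply]
      grind
    rw [weight_eq] at weight_nonneg
    omega
  exact mem_closure_hibiExponents
    (fun p => le_of_generators fun I _ _ => by simp)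
    fun p q hpq => le_of_generators fun I hI hq => by simpa using hI hpq (by simpa using hq)

theorem hibiAlgebra_eq_monomialSubalgebra (R P : Type*) [CommSemiring R] [Preorder P] :
    hibiAlgebra R P = monomialSubalgebra R (hibiExponents P) := by
  simp only [hibiAlgebra, monomialSubalgebra, hibiExponents, Set.image_image, monomial_hibiExponent]
  congr 1
  ext m
  simp [eq_comm]

theorem stmt16_general (R P : Type*) [CommRing R] [IsDomain R] [IsIntegrallyClosed R]
    [Preorder P] : IsDomain (hibiAlgebra R P) ∧ IsIntegrallyClosed (hibiAlgebra R P) := by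
  refine ⟨inferInstance, ?_⟩
  rw [hibiAlgebra_eq_monomialSubalgebra]
  exact isIntegrallyClosed_monomialSubalgebra fun _ => mem_closure_hibiExponents_of_weight_nonneg

end HibiAlgebra

/-- The Hibi ring `ℂ[P]` is a normal domain: an integral domain which is
integrally closed in its field of fractions. -/
theorem stmt16 (P : Type*) [PartialOrder P] [Fintype P] :
    IsDomain (hibiRing P) ∧ IsIntegrallyClosed (hibiRing P) :=
  stmt16_general ℂ P
end
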